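/- Let q ∈ ℂ with 0 < |q| < 1 (or more generally with (q;q)_{b-a} ≠ 0 and q ≠ 0), let w ∈ ℂ, and let a ≤ b be nonnegative integers. Then Σ_{n=a}^{b} (-1)^n (1 - w q^n) q^{n(n-1)/2 - a n} / ( (q;q)_{b-n} (q;q)_{n-a} ) equals (-1)^a q^{-a(a+1)/2} (1 - w q^a) if a = b, and equals (-1)^{a+1} w q^{-a(a-1)/2} if a < b. -/

import Mathlib

open Finset

/-- The finite q-Pochhammer symbol `(a;q)_n`. -/
noncomputable def qPoch (q a : ℂ) (n : ℕ) : ℂ := ∏ j ∈ Finset.range n, (1 - a * q ^ j)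

theorem qPoch_succ' (q a : ℂ) (n : ℕ) : qPoch q a (n+1) = qPoch q a n * (1 - a * q ^ n) := by
  simp [qPoch, Finset.prod_range_succ]

theorem qPoch_ne (q a : ℂ) {m n : ℕ} (h : m ≤ n) (hn : qPoch q a n ≠ 0) : qPoch q a m ≠ 0 := by
  unfold qPoch at *
  rw [Finset.prod_ne_zero_iff] at *
  intro j hj
  apply hn
  simp only [Finset.mem_range] at *
  omega

theorem qbinom_aux (q x : ℂ) (N : ℕ) (hN : qPoch q q N ≠ 0) :
    qPoch q q N * ∑ k ∈ Finset.range (N+1), (-1 : ℂ)^k * q ^ (k.choose 2) * x ^ k /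
      (qPoch q q (N-k) * qPoch q q k) = qPoch q x N := by
  induction N with
  | zero => simp [qPoch]
  | succ N ih =>
    have hN' := qPoch_ne q q (Nat.le_succ N) hN
    specialize ih hN'
    have key : (1 - q * q ^ N) * ∑ k ∈ Finset.range (N+1+1), (-1 : ℂ)^k * q ^ (k.choose 2) * x ^ k /
      (qPoch q q (N+1-k) * qPoch q q k) = (1 - x * q ^ N) *
        ∑ k ∈ Finset.range (N+1), (-1 : ℂ)^k * q ^ (k.choose 2) * x ^ k /
      (qPoch q q (N-k) * qPoch q q k) := by
      have h1 : (1 - q * q ^ N) * ∑ k ∈ Finset.range (N+1+1), (-1 : ℂ)^k * q ^ (k.choose 2) * x ^ k /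
          (qPoch q q (N+1-k) * qPoch q q k) =
          ∑ k ∈ Finset.range (N+1+1), (-1 : ℂ)^k * q ^ (k.choose 2) * x ^ k /
          (qPoch q q (N+1-k) * qPoch q q k) * (1 - q ^ (N+1-k)) +
          ∑ k ∈ Finset.range (N+1+1), (-1 : ℂ)^k * q ^ (k.choose 2) * x ^ k /
          (qPoch q q (N+1-k) * qPoch q q k) * (q ^ (N+1-k) * (1 - q ^ k)) := by
        rw [Finset.mul_sum, ← Finset.sum_add_distrib]
        refine Finset.sum_congr rfl fun k hk => ?_
        have hk' : k ≤ N + 1 := by simp at hk; omega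
        have : q * q ^ N = q ^ (N+1-k) * q ^ k := by
          rw [← pow_add, Nat.sub_add_cancel hk']; ring
        rw [this]; ring
      rw [h1, Finset.sum_range_succ, Finset.sum_range_succ' _ (N+1)]
      simp only [Nat.sub_self, pow_zero, sub_self, mul_zero, add_zero]
      rw [← Finset.sum_add_distrib, Finset.mul_sum]
      refine Finset.sum_congr rfl fun k hk => ?_
      have hk' : k ≤ N := by simp at hk; omega
      obtain ⟨m, rfl⟩ := Nat.exists_eq_add_of_le hk'
      have e1 : k + m + 1 - k = m + 1 := by omega
      have e2 : k + m + 1 - (k + 1) = m := by omega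
      have e3 : k + m - k = m := by omega
      have e4 : (k+1).choose 2 = k + k.choose 2 := by
        rw [Nat.choose_succ_succ' k 1]; simp
      rw [e1, e2, e3, e4, qPoch_succ', qPoch_succ']
      have a1 := qPoch_ne q q (show m ≤ k+m+1 by omega) hN
      have a2 := qPoch_ne q q (show k ≤ k+m+1 by omega) hN
      have a3 := qPoch_ne q q (show m+1 ≤ k+m+1 by omega) hN
      have a4 := qPoch_ne q q (show k+1 ≤ k+m+1 by omega) hN
      rw [qPoch_succ'] at a3 a4
      have b3 := right_ne_zero_of_mul a3
      have b4 := right_ne_zero_of_mul a4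
      rw [pow_succ' q m, pow_succ' q k]
      generalize qPoch q q m = P at *
      generalize qPoch q q k = Q at *
      have c1 : ∀ T : ℂ, T / (P * (1 - q * q^m) * Q) * (1 - q * q^m) = T / (P * Q) := by
        intro T; field_simp
      have c2 : ∀ T U : ℂ, T / (P * (Q * (1 - q * q^k))) * (U * (1 - q * q^k)) = T * U / (P * Q) := by
        intro T U; field_simp
      rw [c1, c2]
      ring
    rw [qPoch_succ', qPoch_succ', mul_assoc, key, ← ih]
    ring

/-- the evaluation
`Σ_{n=a}^{b} (-1)^n (1 - w q^n) q^{n(n-1)/2 - an}/((q;q)_{b-n}(q;q)_{n-a})`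
equals `(-1)^a q^{-a(a+1)/2}(1 - w q^a)` if `a = b` and `(-1)^{a+1} w q^{-a(a-1)/2}`
otherwise, under the hypotheses `q ≠ 0` and `(q;q)_{b-a} ≠ 0` (which hold in
particular for `0 < |q| < 1`). -/
theorem stmt9 (q w : ℂ) (a b : ℕ) (hab : a ≤ b) (hq0 : q ≠ 0)
    (hq : qPoch q q (b - a) ≠ 0) :
    ∑ n ∈ Finset.Icc a b,
      (-1 : ℂ) ^ n * (1 - w * q ^ n) *
          q ^ ((n : ℤ) * ((n : ℤ) - 1) / 2 - (a : ℤ) * n) /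
        (qPoch q q (b - n) * qPoch q q (n - a)) =
    if a = b then
      (-1 : ℂ) ^ a * q ^ (-((a : ℤ) * ((a : ℤ) + 1) / 2)) * (1 - w * q ^ a)
    else
      (-1 : ℂ) ^ (a + 1) * w * q ^ (-((a : ℤ) * ((a : ℤ) - 1) / 2)) := by
  obtain ⟨N, rfl⟩ := Nat.exists_eq_add_of_le hab
  rw [Nat.add_sub_cancel_left] at hq
  have h0 := qbinom_aux q 1 N hq
  have h1 := qbinom_aux q q N hq
  have h1' := mul_left_cancel₀ hq (h1.trans (mul_one _).symm)
  have ch : ∀ k : ℕ, (k : ℤ) * ((k : ℤ) - 1) / 2 = (k.choose 2 : ℕ) := by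
    intro k
    rw [Nat.choose_two_right]
    cases k <;> simp
  have ch2 : ∀ k : ℕ, (k : ℤ) * ((k : ℤ) + 1) / 2 = (k.choose 2 : ℕ) + k := by
    intro k
    have := ch (k+1)
    rw [Nat.choose_succ_succ' k 1] at this
    push_cast at this
    simp at this
    rw [mul_comm, this]; ring
  have chadd : ∀ k : ℕ, ((a+k).choose 2 : ℕ) = a.choose 2 + k.choose 2 + a * k := by
    intro k
    induction k with
    | zero => simp
    | succ k ih =>
      rw [← add_assoc, Nat.choose_succ_succ' (a+k) 1, Nat.choose_succ_succ' k 1, ih]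
      simp; ring
  have main : ∑ n ∈ Finset.Icc a (a+N),
      (-1 : ℂ) ^ n * (1 - w * q ^ n) *
          q ^ ((n : ℤ) * ((n : ℤ) - 1) / 2 - (a : ℤ) * n) /
        (qPoch q q (a + N - n) * qPoch q q (n - a)) =
      (-1 : ℂ) ^ a * q ^ (-((a : ℤ) * ((a : ℤ) + 1) / 2)) *
       (∑ k ∈ Finset.range (N+1), (-1 : ℂ)^k * q ^ (k.choose 2) * 1 ^ k /
      (qPoch q q (N-k) * qPoch q q k) - w * q ^ a * ∑ k ∈ Finset.range (N+1), (-1 : ℂ)^k * q ^ (k.choose 2) * q ^ k /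
      (qPoch q q (N-k) * qPoch q q k)) := by
    rw [← Finset.Ico_add_one_right_eq_Icc, Finset.sum_Ico_eq_sum_range, Finset.mul_sum,
      ← Finset.sum_sub_distrib, Finset.mul_sum]
    have : a + N + 1 - a = N + 1 := by omega
    rw [this]
    refine Finset.sum_congr rfl fun k hk => ?_
    have e1 : a + N - (a + k) = N - k := by omega
    have e2 : a + k - a = k := by omega
    have e3 : ((a + k : ℕ) : ℤ) * (((a + k : ℕ) : ℤ) - 1) / 2 - (a : ℤ) * (a + k : ℕ) =
      -((a : ℤ) * ((a : ℤ) + 1) / 2) + (k.choose 2 : ℕ) := by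
      rw [ch, ch2, chadd]
      have := ch2 a
      have h2 : (a : ℤ) * (a + 1) = 2 * ((a.choose 2 : ℕ) + a) := by
        have h3 : (2 : ℤ) ∣ a * (a + 1) := (Int.even_mul_succ_self a).two_dvd
        omega
      push_cast
      linarith
    rw [e1, e2, e3, zpow_add₀ hq0, zpow_natCast]
    ring
  rw [main, h1']
  rcases Nat.eq_zero_or_pos N with rfl | hN
  · simp [qPoch]
  · have z : qPoch q 1 N = 0 := by
      unfold qPoch
      exact Finset.prod_eq_zero (Finset.mem_range.2 hN) (by simp)
    rw [z] at h0
    rw [(mul_eq_zero.1 h0).resolve_left hq, if_neg (by omega), ch, ch2]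
    have : q ^ (-((a.choose 2 : ℕ) : ℤ)) = q ^ (-(((a.choose 2 : ℕ) : ℤ) + a)) * q ^ a := by
      rw [← zpow_natCast q a, ← zpow_add₀ hq0]; congr 1; ring
    rw [this]; ring
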